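/- arXiv:2102.09496 — 7 statements merged into one kernel-verified Lean document; each statement's English description precedes it below -/
import Mathlib

section
/- Let p and q be nonzero univariate polynomials over ℂ of degrees m and n respectively, let k be the degree of gcd(p, q), and let (û, v̂, ŵ) be polynomials with deg(û) = k, û·v̂ = p and û·ŵ = q. Consider the ℂ-linear map L from the space P_k × P_{m−k} × P_{n−k} (where P_l denotes the space of polynomials of degree at most l) to P_m × P_n defined by L(a, b, c) = (a·v̂ + û·b, a·ŵ + û·c). Then the kernel of L is the one-dimensional subspace {(t·û, −t·v̂, −t·ŵ) : t ∈ ℂ}; equivalently, L has nullity 1 and rank m + n − k + 2 (the domain having dimension m + n − k + 3). -/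
open Polynomial

/-!
If `d` divides both `v` and `w`, then `u * d` divides `gcd (u * v) (u * w)`; since `u` already has
the degree of that gcd, `d` is constant. So the cofactors `v` and `w` are coprime, say
`r * v + s * w = 1`. If `a * v + u * b = 0` and `a * w + u * c = 0`, then
`a = a * (r * v + s * w) = -u * (r * b + s * c)`, so `u ∣ a`, and `deg a ≤ deg u` forces
`a = t * u` for a scalar `t`. Cancelling `u` gives `b = -t * v` and `c = -t * w`.
The kernel is therefore a line, and the rank follows from rank–nullity.
-/

/-- The cofactors of a common divisor having the degree of the gcd are coprime. -/
theorem isCoprime_cofactors {u v w : Polynomial ℂ} (huv : u * v ≠ 0)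
    (hk : (EuclideanDomain.gcd (u * v) (u * w)).natDegree = u.natDegree) : IsCoprime v w := by
  have hu : u ≠ 0 := left_ne_zero_of_mul huv
  have hv : v ≠ 0 := right_ne_zero_of_mul huv
  set d := EuclideanDomain.gcd v w with hd
  have hd0 : d ≠ 0 := fun h => hv (EuclideanDomain.gcd_eq_zero_iff.1 h).1
  have hg0 : EuclideanDomain.gcd (u * v) (u * w) ≠ 0 :=
    fun h => huv (EuclideanDomain.gcd_eq_zero_iff.1 h).1
  have hdvd : u * d ∣ EuclideanDomain.gcd (u * v) (u * w) :=
    EuclideanDomain.dvd_gcd (mul_dvd_mul_left u (EuclideanDomain.gcd_dvd_left v w))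
      (mul_dvd_mul_left u (EuclideanDomain.gcd_dvd_right v w))
  have hle := natDegree_le_of_dvd hdvd hg0
  rw [natDegree_mul hu hd0, hk] at hle
  have hunit : IsUnit d := by
    rw [isUnit_iff_degree_eq_zero, degree_eq_natDegree hd0]
    have : d.natDegree = 0 := by omega
    simp [this]
  exact EuclideanDomain.gcd_isUnit_iff.1 hunit

/-- The syzygy computation: a triple annihilated by the Jacobian, with `deg a ≤ deg u`, is a scalar
multiple of `(u, -v, -w)`. -/
theorem exists_scalar_of_syzygy {u v w a b c : Polynomial ℂ} (hu : u ≠ 0) (hvw : IsCoprime v w)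
    (ha : a.natDegree ≤ u.natDegree) (h1 : a * v + u * b = 0) (h2 : a * w + u * c = 0) :
    ∃ t : ℂ, a = C t * u ∧ b = -(C t * v) ∧ c = -(C t * w) := by
  obtain ⟨r, s, hrs⟩ := hvw
  obtain ⟨e, rfl⟩ : u ∣ a :=
    ⟨-(r * b + s * c), by linear_combination (-a) * hrs + r * h1 + s * h2⟩
  have he : e.natDegree = 0 := by
    by_cases h : e = 0
    · simp [h]
    · rw [natDegree_mul hu h] at ha
      omega
  obtain ⟨t, rfl⟩ := natDegree_eq_zero.1 he
  refine ⟨t, mul_comm _ _, mul_left_cancel₀ hu ?_, mul_left_cancel₀ hu ?_⟩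
  · linear_combination h1
  · linear_combination h2

theorem mem_degreeLT_succ {l : ℕ} {f : Polynomial ℂ} :
    f ∈ degreeLT ℂ (l + 1) ↔ f.natDegree ≤ l := by
  rw [mem_degreeLT, natDegree_le_iff_degree_le]
  exact_mod_cast Order.lt_succ_iff (a := f.degree) (b := (l : WithBot ℕ))

instance finite_degreeLT (l : ℕ) : Module.Finite ℂ (degreeLT ℂ l) :=
  Module.Finite.equiv (degreeLTEquiv ℂ l).symm

theorem finrank_degreeLT (l : ℕ) : Module.finrank ℂ (degreeLT ℂ l) = l := by
  rw [(degreeLTEquiv ℂ l).finrank_eq, Module.finrank_fin_fun]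

/-- Semiregularity of the GCD equation: the Jacobian
`L(a,b,c) = (a·v̂ + û·b, a·ŵ + û·c)` of the GCD map at a GCD triple `(û, v̂, ŵ)`,
defined on `P_k × P_{m-k} × P_{n-k}` (polynomials of degree at most `l` being `P_l`),
has kernel exactly the one-dimensional family `{(t·û, -t·v̂, -t·ŵ) : t ∈ ℂ}`,
hence nullity `1` and rank `m + n - k + 2`. -/
theorem stmt_6 (p q : Polynomial ℂ) (hp : p ≠ 0) (hq : q ≠ 0)
    (m n k : ℕ) (hm : p.natDegree = m) (hn : q.natDegree = n)
    (hk : (EuclideanDomain.gcd p q).natDegree = k)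
    (uh vh wh : Polynomial ℂ)
    (huk : uh.natDegree = k) (huv : uh * vh = p) (huw : uh * wh = q)
    (L : ↥(degreeLT ℂ (k + 1)) × ↥(degreeLT ℂ (m - k + 1)) × ↥(degreeLT ℂ (n - k + 1))
        →ₗ[ℂ] Polynomial ℂ × Polynomial ℂ)
    (hL : ∀ (a : ↥(degreeLT ℂ (k + 1))) (b : ↥(degreeLT ℂ (m - k + 1)))
        (c : ↥(degreeLT ℂ (n - k + 1))),
      L (a, b, c) = ((a : Polynomial ℂ) * vh + uh * (b : Polynomial ℂ),
                     (a : Polynomial ℂ) * wh + uh * (c : Polynomial ℂ))) :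
    (∀ x, x ∈ LinearMap.ker L ↔ ∃ t : ℂ,
        (x.1 : Polynomial ℂ) = C t * uh ∧
        (x.2.1 : Polynomial ℂ) = -(C t * vh) ∧
        (x.2.2 : Polynomial ℂ) = -(C t * wh)) ∧
    Module.finrank ℂ (LinearMap.ker L) = 1 ∧
    Module.finrank ℂ (LinearMap.range L) = m + n - k + 2 := by
  subst hm hn huv huw huk
  have hu : uh ≠ 0 := left_ne_zero_of_mul hp
  have hv : vh ≠ 0 := right_ne_zero_of_mul hp
  have hw : wh ≠ 0 := right_ne_zero_of_mul hq
  have hvw : IsCoprime vh wh := isCoprime_cofactors hp hk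
  have hdv : (uh * vh).natDegree = uh.natDegree + vh.natDegree := natDegree_mul hu hv
  have hdw : (uh * wh).natDegree = uh.natDegree + wh.natDegree := natDegree_mul hu hw
  have hker : ∀ x, x ∈ LinearMap.ker L ↔ ∃ t : ℂ,
      (x.1 : Polynomial ℂ) = C t * uh ∧
      (x.2.1 : Polynomial ℂ) = -(C t * vh) ∧
      (x.2.2 : Polynomial ℂ) = -(C t * wh) := by
    rintro ⟨a, b, c⟩
    rw [LinearMap.mem_ker, hL, Prod.mk_eq_zero]
    constructor
    · rintro ⟨h1, h2⟩
      exact exists_scalar_of_syzygy hu hvw (mem_degreeLT_succ.1 a.2) h1 h2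
    · rintro ⟨t, h1, h2, h3⟩
      dsimp only at h1 h2 h3
      rw [h1, h2, h3]
      constructor <;> ring
  have hone : Module.finrank ℂ (LinearMap.ker L) = 1 := by
    let x₀ : ↥(degreeLT ℂ (uh.natDegree + 1)) ×
        ↥(degreeLT ℂ ((uh * vh).natDegree - uh.natDegree + 1)) ×
        ↥(degreeLT ℂ ((uh * wh).natDegree - uh.natDegree + 1)) :=
      (⟨uh, mem_degreeLT_succ.2 le_rfl⟩,
        ⟨-vh, mem_degreeLT_succ.2 (by rw [natDegree_neg]; omega)⟩,
        ⟨-wh, mem_degreeLT_succ.2 (by rw [natDegree_neg]; omega)⟩)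
    have hx₀ : x₀ ∈ LinearMap.ker L := (hker x₀).2 ⟨1, by simp [x₀]⟩
    refine finrank_eq_one (⟨x₀, hx₀⟩ : LinearMap.ker L) ?_ ?_
    · intro h
      exact hu (congrArg (fun y => ((y : LinearMap.ker L).1.1 : Polynomial ℂ)) h)
    · rintro ⟨x, hx⟩
      obtain ⟨t, h1, h2, h3⟩ := (hker x).1 hx
      refine ⟨t, Subtype.ext (Prod.ext (Subtype.ext ?_) (Prod.ext (Subtype.ext ?_)
        (Subtype.ext ?_)))⟩
      · simp [x₀, h1, smul_eq_C_mul]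
      · simp [x₀, h2, smul_eq_C_mul]
      · simp [x₀, h3, smul_eq_C_mul]
  refine ⟨hker, hone, ?_⟩
  have hrn := L.finrank_range_add_finrank_ker
  rw [hone, Module.finrank_prod, Module.finrank_prod, finrank_degreeLT, finrank_degreeLT,
    finrank_degreeLT] at hrn
  omega
end

section
/- Let R be the polynomial ring over ℂ in finitely many variables. Let û₁, …, û_k ∈ R be irreducible polynomials that are pairwise non-associated (no û_i is a nonzero scalar multiple of û_j for i ≠ j), let ℓ₁, …, ℓ_k ≥ 1 be integers, and let û₀ ∈ ℂ be a nonzero scalar. Suppose u₀ ∈ ℂ and u₁, …, u_k ∈ R satisfy u₀ · ∏_{j=1}^{k} û_j^{ℓ_j} + û₀ · Σ_{i=1}^{k} ℓ_i · u_i · û_i^{ℓ_i − 1} · ∏_{j ≠ i} û_j^{ℓ_j} = 0. Then û_i divides u_i for every i = 1, …, k. -/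
/-! Fix `i`. The power `ûᵢ ^ ℓᵢ` divides the product `∏ ûⱼ ^ ℓⱼ` and every summand of index
`m ≠ i`, so by the equation it divides the `i`-th summand as well. Cancelling `ûᵢ ^ (ℓᵢ - 1)` leaves
`ûᵢ ∣ û₀ * ℓᵢ * uᵢ * ∏_{j ≠ i} ûⱼ ^ ℓⱼ`. The polynomial ring is a unique factorization domain, so `ûᵢ`
is prime; it divides neither the nonzero constant `û₀ * ℓᵢ` nor any non-associated irreducible `ûⱼ`,
hence it divides `uᵢ`. -/

open MvPolynomial Finset

/-- Divisibility step in the semiregularity of polynomial factorization: if irreducible,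
pairwise non-associated `û₁, …, û_k` and a nonzero scalar `û₀` satisfy
`u₀·∏ ûⱼ^ℓⱼ + û₀·Σᵢ ℓᵢ·uᵢ·ûᵢ^(ℓᵢ-1)·∏_{j≠i} ûⱼ^ℓⱼ = 0`
then `ûᵢ ∣ uᵢ` for every `i`. -/
theorem stmt_7 {N k : ℕ}
    (uhat : Fin k → MvPolynomial (Fin N) ℂ)
    (hirr : ∀ i, Irreducible (uhat i))
    (hassoc : ∀ i j, i ≠ j → ¬ Associated (uhat i) (uhat j))
    (ℓ : Fin k → ℕ) (hℓ : ∀ i, 1 ≤ ℓ i)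
    (uhat0 : ℂ) (h0 : uhat0 ≠ 0)
    (u0 : ℂ) (u : Fin k → MvPolynomial (Fin N) ℂ)
    (heq : C u0 * ∏ j, uhat j ^ ℓ j +
        C uhat0 * ∑ i, (ℓ i : MvPolynomial (Fin N) ℂ) * u i * uhat i ^ (ℓ i - 1) *
          ∏ j ∈ univ.erase i, uhat j ^ ℓ j = 0) :
    ∀ i, uhat i ∣ u i := by
  intro i
  have hp : Prime (uhat i) := (hirr i).prime
  have hunit : ∀ c : ℂ, c ≠ 0 → ¬ uhat i ∣ C c := fun c hc hd =>
    hp.not_isUnit (isUnit_of_dvd_unit hd ((isUnit_iff_ne_zero.mpr hc).map C))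
  have hprod : ¬ uhat i ∣ ∏ j ∈ univ.erase i, uhat j ^ ℓ j := by
    rw [hp.dvd_finsetProd_iff]
    rintro ⟨j, hj, hd⟩
    exact hassoc i j (ne_of_mem_erase hj).symm
      ((hirr i).associated_of_dvd (hirr j) (hp.dvd_of_dvd_pow hd))
  have hrest : uhat i ^ ℓ i ∣ ∑ m ∈ univ.erase i, (ℓ m : MvPolynomial (Fin N) ℂ) * u m *
      uhat m ^ (ℓ m - 1) * ∏ j ∈ univ.erase m, uhat j ^ ℓ j := by
    refine dvd_sum fun m hm => Dvd.dvd.mul_left ?_ _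
    exact dvd_prod_of_mem (fun j => uhat j ^ ℓ j)
      (mem_erase.mpr ⟨(ne_of_mem_erase hm).symm, mem_univ i⟩)
  have hall : uhat i ^ ℓ i ∣ ∏ j, uhat j ^ ℓ j :=
    dvd_prod_of_mem (fun j => uhat j ^ ℓ j) (mem_univ i)
  rw [← add_sum_erase _ _ (mem_univ i), mul_add, ← add_assoc] at heq
  have hterm : uhat i ^ ℓ i ∣ C uhat0 * ((ℓ i : MvPolynomial (Fin N) ℂ) * u i *
      uhat i ^ (ℓ i - 1) * ∏ j ∈ univ.erase i, uhat j ^ ℓ j) := by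
    have h1 := (dvd_add_left (hrest.mul_left (C uhat0))).mp (heq ▸ dvd_zero _)
    exact (dvd_add_right (hall.mul_left (C u0))).mp h1
  have hcancel : uhat i ∣ C uhat0 * (C (ℓ i : ℂ) * u i *
      ∏ j ∈ univ.erase i, uhat j ^ ℓ j) := by
    refine (mul_dvd_mul_iff_left (pow_ne_zero (ℓ i - 1) hp.ne_zero)).mp ?_
    rw [← pow_succ, Nat.sub_add_cancel (hℓ i)]
    convert hterm using 1
    rw [map_natCast]
    ring
  have hl : (ℓ i : ℂ) ≠ 0 := Nat.cast_ne_zero.mpr (Nat.one_le_iff_ne_zero.mp (hℓ i))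
  have h1 := (hp.dvd_or_dvd hcancel).resolve_left (hunit _ h0)
  have h2 := (hp.dvd_or_dvd h1).resolve_right hprod
  exact (hp.dvd_or_dvd h2).resolve_left (hunit _ hl)
end

section
/- Let R be the polynomial ring over ℂ in finitely many variables, let û₁, …, û_k ∈ R be irreducible and pairwise non-associated, let ℓ₁, …, ℓ_k ≥ 1 be integers, and let û₀ ∈ ℂ be nonzero. For j = 1, …, k let U_j ⊆ R be a ℂ-subspace containing û_j that is a proper hosting space for û_j, i.e. whenever s ∈ R and s·û_j ∈ U_j, then s is a constant; set U₀ = ℂ. Consider the ℂ-linear map L : U₀ × U₁ × ⋯ × U_k → R defined by L(u₀, …, u_k) = u₀ · ∏_{j=1}^{k} û_j^{ℓ_j} + û₀ · Σ_{i=1}^{k} ℓ_i · u_i · û_i^{ℓ_i − 1} · ∏_{j ≠ i} û_j^{ℓ_j}. Then the kernel of L equals { (s₀·û₀, s₁·û₁, …, s_k·û_k) : s₀, …, s_k ∈ ℂ, s₀ + Σ_{j=1}^{k} ℓ_j s_j = 0 }, which is a subspace of dimension exactly k. -/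
/-!
If `L (u₀, u) = 0`, then every summand of `L (u₀, u)` other than the one carrying `uᵢ` is divisible
by `ûᵢ ^ ℓᵢ`, hence so is that one. Cancelling `ûᵢ ^ (ℓᵢ - 1)` gives
`ûᵢ ∣ ℓᵢ uᵢ ∏_{j ≠ i} ûⱼ ^ ℓⱼ`. As `R` is a unique factorization domain, `ûᵢ` is prime, and it
divides neither the nonzero constant `ℓᵢ` nor any non-associated `ûⱼ`, so `ûᵢ ∣ uᵢ`
(`dvd_of_jacobian_eq_zero`). The hosting space is proper, so `uᵢ = sᵢ ûᵢ` with `sᵢ` constant. On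
such tuples the map is `(u₀ + û₀ ∑ ℓᵢ sᵢ) ∏ ûⱼ ^ ℓⱼ` (`jacobian_scaling`), which vanishes exactly
when the scalar does. The kernel is thus parametrized linearly and injectively by
`(s₁, …, s_k) ∈ ℂ ^ k`.
-/

open MvPolynomial Finset

/-- The Jacobian on a tuple of scaled factors `uᵢ = sᵢ ûᵢ` is a scalar multiple of `∏ ûⱼ ^ ℓⱼ`. -/
lemma jacobian_scaling {N k : ℕ} (uhat : Fin k → MvPolynomial (Fin N) ℂ)
    (ℓ : Fin k → ℕ) (hℓ : ∀ i, 1 ≤ ℓ i) (a u0 : ℂ) (s : Fin k → ℂ) :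
    C u0 * ∏ j, uhat j ^ ℓ j +
        C a * ∑ i, (ℓ i : MvPolynomial (Fin N) ℂ) * (C (s i) * uhat i) *
          uhat i ^ (ℓ i - 1) * ∏ j ∈ univ.erase i, uhat j ^ ℓ j =
      C (u0 + a * ∑ i, (ℓ i : ℂ) * s i) * ∏ j, uhat j ^ ℓ j := by
  have h : ∀ i, (ℓ i : MvPolynomial (Fin N) ℂ) * (C (s i) * uhat i) *
          uhat i ^ (ℓ i - 1) * ∏ j ∈ univ.erase i, uhat j ^ ℓ j =
        C ((ℓ i : ℂ) * s i) * ∏ j, uhat j ^ ℓ j := by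
    intro i
    rw [← mul_prod_erase univ (fun j => uhat j ^ ℓ j) (mem_univ i), C_mul, map_natCast,
      ← mul_pow_sub_one (Nat.one_le_iff_ne_zero.mp (hℓ i)) (uhat i)]
    ring
  rw [sum_congr rfl fun i _ => h i, ← sum_mul, C_add, C_mul, map_sum]
  ring

/-- Every summand of the Jacobian other than the one carrying `uᵢ` is divisible by `ûᵢ ^ ℓᵢ`, so a
tuple it kills has `ûᵢ ∣ uᵢ`; no hosting-space condition enters here. -/
lemma dvd_of_jacobian_eq_zero {N k : ℕ} (uhat : Fin k → MvPolynomial (Fin N) ℂ)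
    (hirr : ∀ i, Irreducible (uhat i))
    (hassoc : ∀ i j, i ≠ j → ¬ Associated (uhat i) (uhat j))
    (ℓ : Fin k → ℕ) (hℓ : ∀ i, 1 ≤ ℓ i) (a u0 : ℂ) (ha : a ≠ 0)
    (u : Fin k → MvPolynomial (Fin N) ℂ)
    (h : C u0 * ∏ j, uhat j ^ ℓ j +
        C a * ∑ i, (ℓ i : MvPolynomial (Fin N) ℂ) * u i *
          uhat i ^ (ℓ i - 1) * ∏ j ∈ univ.erase i, uhat j ^ ℓ j = 0) (i : Fin k) :
    uhat i ∣ u i := by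
  have hp : Prime (uhat i) := (hirr i).prime
  have hunit : ∀ c : ℂ, c ≠ 0 → ¬ uhat i ∣ C c := fun c hc hd =>
    hp.not_isUnit (isUnit_of_dvd_unit hd ((isUnit_iff_ne_zero.mpr hc).map C))
  rw [← add_sum_erase univ _ (mem_univ i)] at h
  have h1 : uhat i ^ ℓ i ∣ ∏ j, uhat j ^ ℓ j := dvd_prod_of_mem _ (mem_univ i)
  have h2 : uhat i ^ ℓ i ∣ ∑ m ∈ univ.erase i, (ℓ m : MvPolynomial (Fin N) ℂ) * u m *
      uhat m ^ (ℓ m - 1) * ∏ j ∈ univ.erase m, uhat j ^ ℓ j := by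
    refine dvd_sum fun m hm => Dvd.dvd.mul_left ?_ _
    exact dvd_prod_of_mem (fun j => uhat j ^ ℓ j)
      (mem_erase.mpr ⟨(ne_of_mem_erase hm).symm, mem_univ i⟩)
  have h3 : uhat i ^ ℓ i ∣ C a * ((ℓ i : MvPolynomial (Fin N) ℂ) * u i *
      uhat i ^ (ℓ i - 1) * ∏ j ∈ univ.erase i, uhat j ^ ℓ j) := by
    rw [mul_add, add_left_comm] at h
    rw [eq_neg_of_add_eq_zero_left h, dvd_neg]
    exact dvd_add (h1.mul_left _) (h2.mul_left _)
  have h4 : uhat i ∣ C a * ((ℓ i : MvPolynomial (Fin N) ℂ) * u i *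
      ∏ j ∈ univ.erase i, uhat j ^ ℓ j) := by
    refine (mul_dvd_mul_iff_left (pow_ne_zero (ℓ i - 1) hp.ne_zero)).mp ?_
    rw [pow_sub_one_mul (Nat.one_le_iff_ne_zero.mp (hℓ i))]
    convert h3 using 1
    ring
  have h5 : ¬ uhat i ∣ ∏ j ∈ univ.erase i, uhat j ^ ℓ j := by
    rw [hp.dvd_finsetProd_iff]
    rintro ⟨j, hj, hd⟩
    exact hassoc i j (ne_of_mem_erase hj).symm
      ((hirr i).associated_of_dvd (hirr j) (hp.dvd_of_dvd_pow hd))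
  have h6 : ¬ uhat i ∣ (ℓ i : MvPolynomial (Fin N) ℂ) := by
    rw [← map_natCast C]
    exact hunit _ (Nat.cast_ne_zero.mpr (Nat.one_le_iff_ne_zero.mp (hℓ i)))
  have h7 := (hp.dvd_or_dvd h4).resolve_left (hunit a ha)
  exact (hp.dvd_or_dvd ((hp.dvd_or_dvd h7).resolve_right h5)).resolve_left h6

/-- Semiregularity of polynomial factorization: the Jacobian
`L(u₀,…,u_k) = u₀·∏ ûⱼ^ℓⱼ + û₀·Σᵢ ℓᵢ·uᵢ·ûᵢ^(ℓᵢ-1)·∏_{j≠i} ûⱼ^ℓⱼ`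
at the factor tuple `(û₀, û₁, …, û_k)`, with each `uᵢ` constrained to a proper hosting
space `Uᵢ` of `ûᵢ` (and `U₀ = ℂ`), has kernel exactly
`{(s₀û₀, s₁û₁, …, s_kû_k) : s₀ + Σ ℓⱼsⱼ = 0}`, a subspace of dimension `k`. -/
theorem stmt_8 {N k : ℕ}
    (uhat : Fin k → MvPolynomial (Fin N) ℂ)
    (hirr : ∀ i, Irreducible (uhat i))
    (hassoc : ∀ i j, i ≠ j → ¬ Associated (uhat i) (uhat j))
    (ℓ : Fin k → ℕ) (hℓ : ∀ i, 1 ≤ ℓ i)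
    (uhat0 : ℂ) (h0 : uhat0 ≠ 0)
    (U : Fin k → Submodule ℂ (MvPolynomial (Fin N) ℂ))
    (hmem : ∀ i, uhat i ∈ U i)
    (hproper : ∀ i, ∀ s : MvPolynomial (Fin N) ℂ, s * uhat i ∈ U i → ∃ c : ℂ, s = C c)
    (L : (ℂ × ((i : Fin k) → ↥(U i))) →ₗ[ℂ] MvPolynomial (Fin N) ℂ)
    (hL : ∀ (u0 : ℂ) (u : (i : Fin k) → ↥(U i)),
      L (u0, u) = C u0 * ∏ j, uhat j ^ ℓ j +
        C uhat0 * ∑ i, (ℓ i : MvPolynomial (Fin N) ℂ) * (u i : MvPolynomial (Fin N) ℂ) *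
          uhat i ^ (ℓ i - 1) * ∏ j ∈ univ.erase i, uhat j ^ ℓ j) :
    (∀ x, x ∈ LinearMap.ker L ↔ ∃ (s0 : ℂ) (s : Fin k → ℂ),
        x.1 = s0 * uhat0 ∧
        (∀ i, (x.2 i : MvPolynomial (Fin N) ℂ) = C (s i) * uhat i) ∧
        s0 + ∑ j, (ℓ j : ℂ) * s j = 0) ∧
    Module.finrank ℂ (LinearMap.ker L) = k := by
  have hker : ∀ x, x ∈ LinearMap.ker L ↔ ∃ (s0 : ℂ) (s : Fin k → ℂ),
        x.1 = s0 * uhat0 ∧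
        (∀ i, (x.2 i : MvPolynomial (Fin N) ℂ) = C (s i) * uhat i) ∧
        s0 + ∑ j, (ℓ j : ℂ) * s j = 0 := by
    rintro ⟨u0, u⟩
    rw [LinearMap.mem_ker, hL]
    constructor
    · intro h
      have hs : ∀ i, ∃ c : ℂ, (u i : MvPolynomial (Fin N) ℂ) = C c * uhat i := by
        intro i
        obtain ⟨q, hq⟩ := dvd_of_jacobian_eq_zero uhat hirr hassoc ℓ hℓ uhat0 u0 h0
          (fun i => (u i : MvPolynomial (Fin N) ℂ)) h i
        rw [mul_comm] at hq
        obtain ⟨c, rfl⟩ := hproper i q (hq ▸ (u i).2)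
        exact ⟨c, hq⟩
      choose s hs using hs
      refine ⟨u0 / uhat0, s, (div_mul_cancel₀ u0 h0).symm, hs, ?_⟩
      simp only [hs] at h
      rw [jacobian_scaling uhat ℓ hℓ] at h
      have hP : ∏ j, uhat j ^ ℓ j ≠ 0 :=
        prod_ne_zero_iff.mpr fun j _ => pow_ne_zero _ (hirr j).ne_zero
      have h' := (mul_eq_zero.mp h).resolve_right hP
      rw [C_eq_zero] at h'
      field_simp
      rwa [mul_zero]
    · rintro ⟨s0, s, h1, h2, h3⟩
      simp only at h1 h2
      simp only [h2]
      rw [jacobian_scaling uhat ℓ hℓ, h1,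
        show s0 * uhat0 + uhat0 * ∑ i, (ℓ i : ℂ) * s i
          = uhat0 * (s0 + ∑ i, (ℓ i : ℂ) * s i) by ring, h3]
      simp
  refine ⟨hker, ?_⟩
  -- `s₀` is determined by `s₁, …, s_k`, so these are free coordinates on the kernel.
  let φ : (Fin k → ℂ) →ₗ[ℂ] (ℂ × ((i : Fin k) → ↥(U i))) :=
    { toFun := fun s => (-(∑ j, (ℓ j : ℂ) * s j) * uhat0, fun i => s i • ⟨uhat i, hmem i⟩)
      map_add' := fun s t => by
        refine Prod.ext ?_ ?_
        · simp only [Pi.add_apply, mul_add, sum_add_distrib, Prod.fst_add]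
          ring
        · funext i
          exact add_smul _ _ _
      map_smul' := fun c s => by
        refine Prod.ext ?_ ?_
        · simp only [Pi.smul_apply, smul_eq_mul, Prod.smul_fst, RingHom.id_apply,
            mul_left_comm _ c, ← mul_sum]
          ring
        · funext i
          exact mul_smul _ _ _ }
  have hφ : ∀ s i, ((φ s).2 i : MvPolynomial (Fin N) ℂ) = C (s i) * uhat i :=
    fun s i => smul_eq_C_mul _ _
  have hinj : Function.Injective φ := by
    intro s t hst
    funext i
    have h := hφ s i
    rw [hst, hφ t i] at h
    exact (C_injective _ _ (mul_right_cancel₀ (hirr i).ne_zero h)).symm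
  have hrange : LinearMap.range φ = LinearMap.ker L := by
    ext x
    rw [hker]
    constructor
    · rintro ⟨s, rfl⟩
      exact ⟨-∑ j, (ℓ j : ℂ) * s j, s, rfl, hφ s, neg_add_cancel _⟩
    · rintro ⟨s0, s, h1, h2, h3⟩
      refine ⟨s, Prod.ext ?_ ?_⟩
      · rw [h1, eq_neg_of_add_eq_zero_left h3]
        rfl
      · funext i
        exact Subtype.ext ((hφ s i).trans (h2 i).symm)
  rw [← hrange, LinearMap.finrank_range_of_inj hinj, Module.finrank_fin_fun]
end

section
/- Let A ∈ ℂ^{n×n}, let λ̂ ∈ ℂ be an eigenvalue of A, and let m, k be positive integers such that dim ker(A − λ̂ I) = m and dim ker((A − λ̂ I)^k) = k·m. Then ker(A − λ̂ I) ⊆ range((A − λ̂ I)^{k−1}). -/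
/-!
Write `f` for `A - λ̂I` as an endomorphism and `K j = ker (f ^ j)`. The map `f ^ j` sends
`K (j + 1) = (f ^ j)⁻¹ (ker f)` onto `range (f ^ j) ⊓ ker f` with kernel `K j`, so by rank-nullity
`dim K (j + 1) = dim K j + dim (range (f ^ j) ⊓ ker f)` (`finrank_ker_pow_succ`). Each increment is
at most `dim ker f = m`, so `dim K (k - 1) ≤ (k - 1) m` (`finrank_ker_pow_le`). If
`dim K k = k m`, the last increment must be at least `m`, which forces
`range (f ^ (k - 1)) ⊓ ker f = ker f`.
-/

theorem finrank_ker_pow_succ {K V : Type*} [Field K] [AddCommGroup V] [Module K V]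
    [FiniteDimensional K V] (f : V →ₗ[K] V) (j : ℕ) :
    Module.finrank K (LinearMap.ker (f ^ (j + 1))) =
      Module.finrank K (LinearMap.ker (f ^ j)) +
        Module.finrank K (LinearMap.range (f ^ j) ⊓ LinearMap.ker f : Submodule K V) := by
  have hcomap : LinearMap.ker (f ^ (j + 1)) = (LinearMap.ker f).comap (f ^ j) := by
    rw [pow_succ', Module.End.mul_eq_comp, LinearMap.ker_comp]
  have hle : LinearMap.ker (f ^ j) ≤ LinearMap.ker (f ^ (j + 1)) := by
    rw [hcomap]
    exact LinearMap.ker_le_comap _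
  have h := LinearMap.finrank_range_add_finrank_ker
    ((f ^ j).domRestrict (LinearMap.ker (f ^ (j + 1))))
  rw [LinearMap.range_domRestrict, LinearMap.ker_domRestrict] at h
  have hker := (Submodule.comapSubtypeEquivOfLe hle).finrank_eq
  have hmap : (LinearMap.ker (f ^ (j + 1))).map (f ^ j) =
      LinearMap.range (f ^ j) ⊓ LinearMap.ker f := by
    rw [hcomap, Submodule.map_comap_eq]
  rw [hmap] at h
  omega

theorem finrank_ker_pow_le {K V : Type*} [Field K] [AddCommGroup V] [Module K V]
    [FiniteDimensional K V] (f : V →ₗ[K] V) (j : ℕ) :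
    Module.finrank K (LinearMap.ker (f ^ j)) ≤ j * Module.finrank K (LinearMap.ker f) := by
  induction j with
  | zero => simp [Module.End.one_eq_id]
  | succ j ih =>
    have hinc := Submodule.finrank_mono
      (inf_le_right : LinearMap.range (f ^ j) ⊓ LinearMap.ker f ≤ LinearMap.ker f)
    rw [finrank_ker_pow_succ, add_mul, one_mul]
    omega

/-- If `λ̂` is an eigenvalue of `A` with geometric multiplicity `m`
(`dim ker(A - λ̂I) = m`) and `dim ker((A - λ̂I)^k) = k·m` (every Jordan block of `λ̂` has
size at least `k`), then `ker(A - λ̂I) ⊆ range((A - λ̂I)^(k-1))`. -/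
theorem stmt_9 {n : ℕ} (A : Matrix (Fin n) (Fin n) ℂ) (lam : ℂ)
    (m k : ℕ) (hm : 0 < m) (hk : 0 < k)
    (hgeo : Module.finrank ℂ (LinearMap.ker (Matrix.mulVecLin (A - lam • 1))) = m)
    (hpow : Module.finrank ℂ (LinearMap.ker (Matrix.mulVecLin ((A - lam • 1) ^ k))) = k * m) :
    LinearMap.ker (Matrix.mulVecLin (A - lam • 1)) ≤
      LinearMap.range (Matrix.mulVecLin ((A - lam • 1) ^ (k - 1))) := by
  obtain ⟨j, rfl⟩ : ∃ j, k = j + 1 := ⟨k - 1, by omega⟩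
  rw [Nat.add_sub_cancel]
  generalize A - lam • 1 = M at *
  have hpowLin (i : ℕ) : (M ^ i).mulVecLin = M.mulVecLin ^ i := Matrix.toLin'_pow M i
  rw [hpowLin] at hpow ⊢
  have hsucc := finrank_ker_pow_succ M.mulVecLin j
  have hle := finrank_ker_pow_le M.mulVecLin j
  rw [hgeo] at hle
  rw [hpow, add_mul, one_mul] at hsucc
  have heq := Submodule.eq_of_le_of_finrank_le
    (inf_le_right : LinearMap.range (M.mulVecLin ^ j) ⊓ LinearMap.ker M.mulVecLin ≤ _)
    (by rw [hgeo]; omega)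
  exact inf_eq_right.mp heq
end

section
/- Let A ∈ ℂ^{n×n}, let λ̂ ∈ ℂ be an eigenvalue of A, and let m, k be positive integers such that dim ker(A − λ̂ I) = m and dim ker((A − λ̂ I)^k) = k·m. Let S ∈ ℂ^{k×k} be strictly upper triangular (s_{ij} = 0 whenever i ≥ j) with all superdiagonal entries nonzero (s_{12} s_{23} ⋯ s_{k−1,k} ≠ 0). Then the ℂ-vector space { X ∈ ℂ^{n×k} : A X − λ̂ X − X S = 0 } has dimension exactly m·k. -/
/-!
Put `N = A - lam • 1`, so that the equation reads `N * X = X * S`. The last standard basis vector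
`e` is a cyclic vector for `S`: the vectors `e, S e, …, S ^ (k - 1) e` form a triangular system
with nonzero diagonal (read from the bottom row up), and `S ^ k e = 0`
(`pow_apply_eq_zero`, `pow_apply_last_ne_zero`, `isUnit_krylov`).

A solution `X` satisfies `X (S ^ j e) = N ^ j (X e)`, hence it is determined by its last column
`X e`, which lies in `ker (N ^ k)`. Conversely, for `y ∈ ker (N ^ k)` the prescription
`X (S ^ j e) = N ^ j y` for `j < k` defines a matrix `X`, and it solves the equation because both
sides vanish at `j = k`. So `X ↦ X e` is an isomorphism from the solution space onto
`ker (N ^ k)`, whose dimension is `k * m`.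
-/

/-- Each multiplication by a strictly upper triangular matrix clears one more row from below, so
the last `j` rows of `S ^ j` vanish. -/
lemma pow_apply_eq_zero {k : ℕ} (S : Matrix (Fin k) (Fin k) ℂ)
    (hS1 : ∀ i j : Fin k, (j : ℕ) ≤ (i : ℕ) → S i j = 0)
    (l : Fin k) (j : ℕ) :
    ∀ i : Fin k, k ≤ i + j → (S ^ j) i l = 0 := by
  induction j with
  | zero => intro i hi; omega
  | succ j ih =>
    intro i hi
    rw [pow_succ', Matrix.mul_apply]
    refine Finset.sum_eq_zero fun p _ => ?_
    by_cases hp : (p : ℕ) ≤ i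
    · rw [hS1 i p hp, zero_mul]
    · rw [ih p (by omega), mul_zero]

/-- The lowest possibly nonzero entry of the last column of `S ^ j` is a product of superdiagonal
entries of `S`. -/
lemma pow_apply_last_ne_zero {k : ℕ} (S : Matrix (Fin k) (Fin k) ℂ)
    (hS1 : ∀ i j : Fin k, (j : ℕ) ≤ (i : ℕ) → S i j = 0)
    (hS2 : ∀ i j : Fin k, (j : ℕ) = (i : ℕ) + 1 → S i j ≠ 0)
    (l : Fin k) (hl : (l : ℕ) + 1 = k) (j : ℕ) :
    ∀ i : Fin k, (i : ℕ) + j + 1 = k → (S ^ j) i l ≠ 0 := by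
  induction j with
  | zero =>
    intro i hi
    obtain rfl : i = l := Fin.ext (by omega)
    simp
  | succ j ih =>
    intro i hi
    have hq : (i : ℕ) + 1 < k := by omega
    rw [pow_succ', Matrix.mul_apply, Finset.sum_eq_single (⟨i + 1, hq⟩ : Fin k)]
    · exact mul_ne_zero (hS2 _ _ rfl) (ih _ (by simp only; omega))
    · intro p _ hp
      have hp' : (p : ℕ) ≠ i + 1 := fun h => hp (Fin.ext h)
      by_cases hpi : (p : ℕ) ≤ i
      · rw [hS1 i p hpi, zero_mul]
      · rw [pow_apply_eq_zero S hS1 l j p (by omega), mul_zero]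
    · simp

/-- The Krylov matrix of `S` and the `l`-th standard basis vector `e`: its `j`-th column is
`S ^ j e`. -/
def krylov {k : ℕ} (S : Matrix (Fin k) (Fin k) ℂ) (l : Fin k) : Matrix (Fin k) (Fin k) ℂ :=
  Matrix.of fun i j => (S ^ (j : ℕ)) i l

lemma isUnit_krylov {k : ℕ} (S : Matrix (Fin k) (Fin k) ℂ)
    (hS1 : ∀ i j : Fin k, (j : ℕ) ≤ (i : ℕ) → S i j = 0)
    (hS2 : ∀ i j : Fin k, (j : ℕ) = (i : ℕ) + 1 → S i j ≠ 0)
    (l : Fin k) (hl : (l : ℕ) + 1 = k) : IsUnit (krylov S l).det := by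
  -- Reversing the order of the rows makes the matrix lower triangular.
  have h : ((krylov S l).submatrix Fin.revPerm id).det ≠ 0 := by
    rw [Matrix.det_of_isLowerTriangular]
    · refine Finset.prod_ne_zero_iff.2 fun i _ => ?_
      exact pow_apply_last_ne_zero S hS1 hS2 l hl i _ (by simp [Fin.val_rev]; omega)
    · intro i j hij
      have hij' : (i : ℕ) < j := hij
      exact pow_apply_eq_zero S hS1 l j _ (by simp [Fin.val_rev]; omega)
  rw [Matrix.det_permute] at h
  exact (right_ne_zero_of_mul h).isUnit

lemma mul_krylov_apply {n k : ℕ} (S : Matrix (Fin k) (Fin k) ℂ) (l : Fin k)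
    (X : Matrix (Fin n) (Fin k) ℂ) (i : Fin n) (j : Fin k) :
    (X * krylov S l) i j = (X * S ^ (j : ℕ)) i l := by
  simp [Matrix.mul_apply, krylov]

/-- If `λ̂` is an eigenvalue of `A` with geometric multiplicity `m` and
`dim ker((A - λ̂I)^k) = k·m`, and `S` is a strictly upper triangular `k×k` matrix with
nonzero superdiagonal entries, then the space `{X : A X - λ̂ X - X S = 0}` of `n×k`
matrix solutions of the eigenequation has dimension exactly `m·k`. -/
theorem stmt_10 {n k : ℕ} (A : Matrix (Fin n) (Fin n) ℂ) (lam : ℂ)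
    (m : ℕ) (hm : 0 < m) (hk : 0 < k)
    (hgeo : Module.finrank ℂ (LinearMap.ker (Matrix.mulVecLin (A - lam • 1))) = m)
    (hpow : Module.finrank ℂ (LinearMap.ker (Matrix.mulVecLin ((A - lam • 1) ^ k))) = k * m)
    (S : Matrix (Fin k) (Fin k) ℂ)
    (hS1 : ∀ i j : Fin k, (j : ℕ) ≤ (i : ℕ) → S i j = 0)
    (hS2 : ∀ i j : Fin k, (j : ℕ) = (i : ℕ) + 1 → S i j ≠ 0)
    (T : Matrix (Fin n) (Fin k) ℂ →ₗ[ℂ] Matrix (Fin n) (Fin k) ℂ)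
    (hT : ∀ X, T X = A * X - lam • X - X * S) :
    Module.finrank ℂ (LinearMap.ker T) = m * k := by
  obtain ⟨l, hl⟩ : ∃ l : Fin k, (l : ℕ) + 1 = k := ⟨⟨k - 1, by omega⟩, by simp only; omega⟩
  have hU := isUnit_krylov S hS1 hS2 l hl
  set N := A - lam • (1 : Matrix (Fin n) (Fin n) ℂ) with hN
  have hT' : ∀ X, T X = N * X - X * S := by
    intro X
    rw [hT, hN, Matrix.sub_mul, Matrix.smul_mul, Matrix.one_mul]
  have hcancel : ∀ X : Matrix (Fin n) (Fin k) ℂ,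
      (∀ (i : Fin n) (j : Fin k), (X * S ^ (j : ℕ)) i l = 0) → X = 0 := by
    intro X h
    have h0 : X * krylov S l = 0 := by
      ext i j
      rw [mul_krylov_apply, h, Matrix.zero_apply]
    rw [← Matrix.mul_nonsing_inv_cancel_right _ X hU, h0, Matrix.zero_mul]
  have hpowX : ∀ X, T X = 0 → ∀ j : ℕ, X * S ^ j = N ^ j * X := by
    intro X hX j
    rw [hT', sub_eq_zero] at hX
    induction j with
    | zero => simp
    | succ j ih =>
      rw [pow_succ, ← Matrix.mul_assoc, ih, Matrix.mul_assoc, ← hX, ← Matrix.mul_assoc, pow_succ]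
  have hSk : ∀ X : Matrix (Fin n) (Fin k) ℂ, ∀ i, (X * S ^ k) i l = 0 := by
    intro X i
    rw [Matrix.mul_apply]
    refine Finset.sum_eq_zero fun p _ => ?_
    rw [pow_apply_eq_zero S hS1 l k p (by omega), mul_zero]
  have hcol : ∀ (B : Matrix (Fin n) (Fin n) ℂ) (X : Matrix (Fin n) (Fin k) ℂ) (i : Fin n),
      (B.mulVec (X.col l)) i = (B * X) i l := fun _ _ _ => rfl
  let f : Matrix (Fin n) (Fin k) ℂ →ₗ[ℂ] (Fin n → ℂ) :=
    { toFun := fun X => X.col l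
      map_add' := fun _ _ => rfl
      map_smul' := fun _ _ => rfl }
  have hf : ∀ X ∈ LinearMap.ker T, f X ∈ LinearMap.ker (Matrix.mulVecLin (N ^ k)) := by
    intro X hX
    rw [LinearMap.mem_ker] at hX
    rw [LinearMap.mem_ker, Matrix.mulVecLin_apply]
    ext i
    change ((N ^ k).mulVec (X.col l)) i = 0
    rw [hcol, ← hpowX X hX, hSk]
  have hbij : Function.Bijective (f.restrict hf) := by
    constructor
    · rw [← LinearMap.ker_eq_bot, LinearMap.ker_eq_bot']
      rintro ⟨X, hX⟩ h
      have hX0 : X.col l = 0 := congrArg Subtype.val h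
      refine Subtype.ext (hcancel X fun i j => ?_)
      rw [hpowX X hX, ← hcol, hX0, Matrix.mulVec_zero, Pi.zero_apply]
    · rintro ⟨y, hy⟩
      rw [LinearMap.mem_ker, Matrix.mulVecLin_apply] at hy
      let Y : Matrix (Fin n) (Fin k) ℂ := Matrix.of fun i j => ((N ^ (j : ℕ)).mulVec y) i
      let X := Y * (krylov S l)⁻¹
      have hXY : X * krylov S l = Y := Matrix.nonsing_inv_mul_cancel_right _ Y hU
      have hX : ∀ (j : ℕ), j ≤ k → ∀ i, (X * S ^ j) i l = ((N ^ j).mulVec y) i := by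
        intro j hj i
        rcases hj.lt_or_eq with hj | rfl
        · have := mul_krylov_apply S l X i ⟨j, hj⟩
          rw [hXY] at this
          exact this.symm
        · rw [hSk, hy, Pi.zero_apply]
      refine ⟨⟨X, ?_⟩, Subtype.ext ?_⟩
      · rw [LinearMap.mem_ker, hT']
        refine hcancel _ fun i j => ?_
        have h1 : (X * S ^ (j : ℕ)).col l = (N ^ (j : ℕ)).mulVec y :=
          funext fun i => hX j j.2.le i
        rw [Matrix.sub_mul, Matrix.sub_apply, Matrix.mul_assoc N, ← hcol, h1, Matrix.mulVec_mulVec,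
          ← pow_succ', Matrix.mul_assoc X, ← pow_succ', hX _ j.2, sub_self]
      · ext i
        have := hX 0 (Nat.zero_le _) i
        rw [pow_zero, pow_zero, Matrix.mul_one, Matrix.one_mulVec] at this
        exact this
  rw [(LinearEquiv.ofBijective _ hbij).finrank_eq, hpow, mul_comm]
end

section
/- A point (x₁, x₂, x₃, x₄) ∈ ℂ⁴ satisfies the cyclic-4 system x₁ + x₂ + x₃ + x₄ = 0, x₁x₂ + x₂x₃ + x₃x₄ + x₄x₁ = 0, x₁x₂x₃ + x₂x₃x₄ + x₃x₄x₁ + x₄x₁x₂ = 0, x₁x₂x₃x₄ − 1 = 0 if and only if x₁ = −x₃, x₂ = −x₄, and either x₃x₄ = 1 or x₃x₄ = −1. In other words, the zero set of the cyclic-4 system in ℂ⁴ is the union of the two one-dimensional branches {x₁ = −x₃, x₂ = −x₄, x₃x₄ = 1} and {x₁ = −x₃, x₂ = −x₄, x₃x₄ = −1}. -/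
/-- The zero set of the cyclic-4 system in `ℂ⁴` is the union of the two one-dimensional
branches `{x₁ = -x₃, x₂ = -x₄, x₃x₄ = 1}` and `{x₁ = -x₃, x₂ = -x₄, x₃x₄ = -1}`. -/
theorem stmt_12 (x₁ x₂ x₃ x₄ : ℂ) :
    (x₁ + x₂ + x₃ + x₄ = 0 ∧
     x₁ * x₂ + x₂ * x₃ + x₃ * x₄ + x₄ * x₁ = 0 ∧
     x₁ * x₂ * x₃ + x₂ * x₃ * x₄ + x₃ * x₄ * x₁ + x₄ * x₁ * x₂ = 0 ∧
     x₁ * x₂ * x₃ * x₄ - 1 = 0) ↔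
    (x₁ = -x₃ ∧ x₂ = -x₄ ∧ (x₃ * x₄ = 1 ∨ x₃ * x₄ = -1)) := by
  constructor
  · rintro ⟨h1, h2, -, h4⟩
    -- The quadratic is `(x₁ + x₃) * (x₂ + x₄)`, and the linear equation makes the factors opposite.
    have hs : (x₁ + x₃) ^ 2 = 0 := by linear_combination (x₁ + x₃) * h1 - h2
    have hs' : x₁ + x₃ = 0 := pow_eq_zero_iff two_ne_zero |>.mp hs
    have hx₁ : x₁ = -x₃ := by linear_combination hs'
    have hx₂ : x₂ = -x₄ := by linear_combination h1 - hs'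
    subst hx₁ hx₂
    exact ⟨rfl, rfl, sq_eq_one_iff.mp (by linear_combination h4)⟩
  · rintro ⟨rfl, rfl, h⟩
    have hsq : (x₃ * x₄) ^ 2 = 1 := sq_eq_one_iff.mpr h
    exact ⟨by ring, by ring, by ring, by linear_combination hsq⟩
end

section
/- Let f : ℂ⁵ → ℂ³ be given by f(x₁, …, x₅) = (x₂²x₄² + x₃²x₅² + x₁³ − 2x₂x₄, x₂³x₄³ − 3x₂²x₄² + x₃²x₅² + x₁² + 3x₂x₄ − 2, x₃³x₅³ + x₂²x₄² + x₁² − 2x₂x₄). Then for all nonzero s, t ∈ ℂ, the point (0, s, t, 1/s, 1/t) is a zero of f, and the 3×5 Jacobian matrix of f at (0, s, t, 1/s, 1/t) has rank 1, i.e. nullity 4. -/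
/-!
With `u = x₁x₃` and `v = x₂x₄` (zero-based indices), the components of `f` are
`(u - 1)² + v² - 1 + x₀³`, `(u - 1)³ + v² - 1 + x₀²` and `(u - 1)² + v³ - 1 + x₀²`.
Where `u = v = 1` and `x₀ = 0` all three vanish, and the contributions of `du` and `dx₀` to the
differential vanish because `u - 1` and `x₀` occur to order at least two. Hence
`df = (2, 2, 3) dv` with `dv = t⁻¹ dx₂ + t dx₄ ≠ 0`: the range is a line, and rank-nullity gives
the dimension of the kernel.
-/

/-- A rank-one operator `x ↦ ℓ x • w` with `ℓ ≠ 0` and `w ≠ 0` has a one-dimensional range. -/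
lemma finrank_range_smulRight {V W : Type*} [NormedAddCommGroup V] [NormedSpace ℂ V]
    [NormedAddCommGroup W] [NormedSpace ℂ W] (l : V →L[ℂ] ℂ) (w : W) (v : V) (hv : l v ≠ 0)
    (hw : w ≠ 0) :
    Module.finrank ℂ (LinearMap.range (l.smulRight w).toLinearMap) = 1 := by
  have h : LinearMap.range (l.smulRight w).toLinearMap = Submodule.span ℂ {w} := by
    ext y
    rw [LinearMap.mem_range, Submodule.mem_span_singleton]
    constructor
    · rintro ⟨x, rfl⟩
      exact ⟨l x, rfl⟩
    · rintro ⟨c, rfl⟩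
      refine ⟨(c / l v) • v, ?_⟩
      simp [smul_smul, hv]
  rw [h, finrank_span_singleton hw]

/-- High-dimension ultrasingularity example: for all nonzero `s, t ∈ ℂ` the point
`(0, s, t, 1/s, 1/t)` is a zero of the map `f : ℂ⁵ → ℂ³`, and the Jacobian of `f`
there has rank `1`, i.e. nullity `4`. -/
theorem stmt_14 (f : (Fin 5 → ℂ) → (Fin 3 → ℂ))
    (hf : ∀ x : Fin 5 → ℂ, f x =
      ![x 1 ^ 2 * x 3 ^ 2 + x 2 ^ 2 * x 4 ^ 2 + x 0 ^ 3 - 2 * x 1 * x 3,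
        x 1 ^ 3 * x 3 ^ 3 - 3 * x 1 ^ 2 * x 3 ^ 2 + x 2 ^ 2 * x 4 ^ 2 + x 0 ^ 2
          + 3 * x 1 * x 3 - 2,
        x 2 ^ 3 * x 4 ^ 3 + x 1 ^ 2 * x 3 ^ 2 + x 0 ^ 2 - 2 * x 1 * x 3]) :
    ∀ s t : ℂ, s ≠ 0 → t ≠ 0 →
      f ![0, s, t, s⁻¹, t⁻¹] = 0 ∧
      Module.finrank ℂ
        (LinearMap.range (fderiv ℂ f ![0, s, t, s⁻¹, t⁻¹]).toLinearMap) = 1 ∧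
      Module.finrank ℂ
        (LinearMap.ker (fderiv ℂ f ![0, s, t, s⁻¹, t⁻¹]).toLinearMap) = 4 := by
  intro s t hs ht
  have p (i : Fin 5) : HasFDerivAt (fun x : Fin 5 → ℂ => x i)
      (ContinuousLinearMap.proj (R := ℂ) (φ := fun _ : Fin 5 => ℂ) i) ![0, s, t, s⁻¹, t⁻¹] :=
    hasFDerivAt_apply i _
  -- `l` is the differential of `x₂x₄` at the point.
  obtain ⟨l, hl⟩ : ∃ l : (Fin 5 → ℂ) →L[ℂ] ℂ, ∀ x, l x = t⁻¹ * x 2 + t * x 4 :=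
    ⟨t⁻¹ • ContinuousLinearMap.proj (R := ℂ) (φ := fun _ : Fin 5 => ℂ) 2 +
      t • ContinuousLinearMap.proj (R := ℂ) (φ := fun _ : Fin 5 => ℂ) 4, fun x => by simp⟩
  have hd : HasFDerivAt f (l.smulRight (![2, 2, 3] : Fin 3 → ℂ)) ![0, s, t, s⁻¹, t⁻¹] := by
    rw [funext hf, hasFDerivAt_pi']
    intro i
    fin_cases i
    · refine HasFDerivAt.congr_fderiv ((((((p 1).pow 2).mul ((p 3).pow 2)).add (((p 2).pow 2).mul ((p 4).pow 2))).add
        ((p 0).pow 3)).sub (((p 1).const_mul 2).mul (p 3))) ?_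
      refine ContinuousLinearMap.ext fun h => ?_
      simp [hl]
      field_simp
      ring
    · refine HasFDerivAt.congr_fderiv ((((((((p 1).pow 3).mul ((p 3).pow 3)).sub
        ((((p 1).pow 2).const_mul 3).mul ((p 3).pow 2))).add
        (((p 2).pow 2).mul ((p 4).pow 2))).add ((p 0).pow 2)).add
        (((p 1).const_mul 3).mul (p 3))).sub_const 2) ?_
      refine ContinuousLinearMap.ext fun h => ?_
      simp [hl]
      field_simp
      ring
    · refine HasFDerivAt.congr_fderiv ((((((p 2).pow 3).mul ((p 4).pow 3)).add (((p 1).pow 2).mul ((p 3).pow 2))).add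
        ((p 0).pow 2)).sub (((p 1).const_mul 2).mul (p 3))) ?_
      refine ContinuousLinearMap.ext fun h => ?_
      simp [hl]
      field_simp
      ring
  have hr : Module.finrank ℂ
      (LinearMap.range (fderiv ℂ f ![0, s, t, s⁻¹, t⁻¹]).toLinearMap) = 1 := by
    rw [hd.fderiv]
    refine finrank_range_smulRight l _ (Pi.single 2 1) ?_ ?_
    · simp [hl, ht]
    · intro h
      simpa using congrFun h 0
  refine ⟨?_, hr, ?_⟩
  · rw [hf]
    ext i
    fin_cases i <;> simp <;> field_simp <;> ring
  · have h := LinearMap.finrank_range_add_finrank_ker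
      (fderiv ℂ f ![0, s, t, s⁻¹, t⁻¹]).toLinearMap
    rw [hr, Module.finrank_fin_fun] at h
    omega
end
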